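/- Let α ∈ ((√129 − 9)/6, √2 − 1) and let T_α be the 2-expansion map on [α, α+1]. Then T_α³(α) = T_α³(α + 1) = (3 − 7α)/(3α − 1). -/

import Mathlib

/-- The `N`-expansion map for `N = 2`: `T_α(x) = 2/x - ⌊2/x - α⌋`. -/
noncomputable def Texp (α x : ℝ) : ℝ := 2 / x - ↑⌊2 / x - α⌋

/-!
`T_α(x)` is the representative of `2 / x` modulo `1` in `[α, α + 1)`, so `T_α(x)` and `T_α(y)`
agree as soon as `2 / x` and `2 / y` differ by an integer. For `α² + 2α < 1` and `2 < α² + 5α` the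
orbits of `α` and `α + 1` start with the digits `4, 1` and `1, 4`, which give
`u = T_α²(α) = (3α - 1) / (1 - 2α)` and `v = T_α²(α + 1) = 2(3α - 1) / (1 - α)`. These satisfy
`2 / v = 2 / u + 1`, so the orbits meet at the third step. The bound `(√129 - 9) / 6 < α`, that is
`4 < 3α² + 9α`, makes the third digit of `α` equal to `1`, which determines the common value.
-/

section

variable {α : ℝ}

theorem Texp_eq_of_mem_Ico {x y : ℝ} (k : ℤ) (hxy : 2 / x = y + k) (hy : y ∈ Set.Ico α (α + 1)) :
    Texp α x = y := by
  have hfloor : ⌊2 / x - α⌋ = k := by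
    rw [Int.floor_eq_iff, hxy]
    constructor <;> linarith [hy.1, hy.2]
  rw [Texp, hfloor, hxy, add_sub_cancel_right]

theorem Texp_eq_Texp_of_two_div_eq_add_intCast {x y : ℝ} (k : ℤ) (hxy : 2 / x = 2 / y + k) :
    Texp α x = Texp α y := by
  rw [Texp, Texp, hxy, add_sub_right_comm (2 / y) (k : ℝ) α, Int.floor_add_intCast, Int.cast_add,
    add_sub_add_right_eq_sub]

theorem Texp_self (hα : 0 < α) (h₄ : α ^ 2 + 4 * α ≤ 2) (h₅ : 2 < α ^ 2 + 5 * α) :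
    Texp α α = 2 * (1 - 2 * α) / α := by
  refine Texp_eq_of_mem_Ico 4 (by push_cast; field_simp; ring) ⟨?_, ?_⟩
  · rw [le_div_iff₀ hα]
    linarith
  · rw [div_lt_iff₀ hα]
    linarith

theorem Texp_add_one (hα : 0 < α) (h : α ^ 2 + 2 * α ≤ 1) :
    Texp α (α + 1) = (1 - α) / (α + 1) := by
  have hα1 : 0 < α + 1 := by linarith
  refine Texp_eq_of_mem_Ico 1 (by push_cast; field_simp; ring) ⟨?_, ?_⟩
  · rw [le_div_iff₀ hα1]
    linarith
  · rw [div_lt_iff₀ hα1]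
    nlinarith

theorem Texp_Texp_self (h₂ : α ^ 2 + 2 * α < 1) (h₅ : 2 < α ^ 2 + 5 * α) :
    Texp α (Texp α α) = (3 * α - 1) / (1 - 2 * α) := by
  have hα : 0 < α := by linarith
  have hden : 0 < 1 - 2 * α := by nlinarith
  rw [Texp_self hα (by linarith) h₅]
  refine Texp_eq_of_mem_Ico 1 (by push_cast; field_simp; ring) ⟨?_, ?_⟩
  · rw [le_div_iff₀ hden]
    nlinarith
  · rw [div_lt_iff₀ hden]
    linarith

theorem Texp_Texp_add_one (h₂ : α ^ 2 + 2 * α ≤ 1) (h₅ : 2 ≤ α ^ 2 + 5 * α) :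
    Texp α (Texp α (α + 1)) = 2 * (3 * α - 1) / (1 - α) := by
  have hα : 0 < α := by linarith
  have hden : 0 < 1 - α := by nlinarith
  rw [Texp_add_one hα h₂]
  refine Texp_eq_of_mem_Ico 4 (by push_cast; field_simp; ring) ⟨?_, ?_⟩
  · rw [le_div_iff₀ hden]
    linarith
  · rw [div_lt_iff₀ hden]
    nlinarith

theorem Texp_Texp_Texp_add_one_eq_Texp_Texp_Texp_self
    (h₂ : α ^ 2 + 2 * α < 1) (h₅ : 2 < α ^ 2 + 5 * α) :
    Texp α (Texp α (Texp α (α + 1))) = Texp α (Texp α (Texp α α)) := by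
  rw [Texp_Texp_add_one h₂.le h₅.le, Texp_Texp_self h₂ h₅]
  have hnum : 3 * α - 1 ≠ 0 := by linarith
  refine Texp_eq_Texp_of_two_div_eq_add_intCast 1 ?_
  rw [div_div_eq_mul_div, div_div_eq_mul_div, mul_div_mul_left _ _ two_ne_zero, Int.cast_one,
    div_add_one hnum]
  ring

theorem Texp_Texp_Texp_self (h₂ : α ^ 2 + 2 * α < 1) (h₉ : 4 < 3 * α ^ 2 + 9 * α) :
    Texp α (Texp α (Texp α α)) = (3 - 7 * α) / (3 * α - 1) := by
  have hden : 0 < 3 * α - 1 := by linarith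
  rw [Texp_Texp_self h₂ (by linarith)]
  refine Texp_eq_of_mem_Ico 1 ?_ ⟨?_, ?_⟩
  · rw [div_div_eq_mul_div, Int.cast_one, div_add_one hden.ne']
    ring
  · rw [le_div_iff₀ hden]
    linarith
  · rw [div_lt_iff₀ hden]
    linarith

theorem four_lt_of_sqrt_lt (h : (√129 - 9) / 6 < α) : 4 < 3 * α ^ 2 + 9 * α := by
  have hsq : 129 < (6 * α + 9) ^ 2 := Real.lt_sq_of_sqrt_lt (by linarith)
  linarith

theorem sq_add_two_mul_lt_one_of_lt_sqrt (hα : -1 ≤ α) (h : α < √2 - 1) :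
    α ^ 2 + 2 * α < 1 := by
  have hsq : (α + 1) ^ 2 < 2 := (Real.lt_sqrt (by linarith)).1 (by linarith)
  linarith

end

theorem stmt_5 (α : ℝ) (h₁ : (Real.sqrt 129 - 9) / 6 < α) (h₂ : α < Real.sqrt 2 - 1) :
    Texp α (Texp α (Texp α α)) = (3 - 7 * α) / (3 * α - 1) ∧
    Texp α (Texp α (Texp α (α + 1))) = (3 - 7 * α) / (3 * α - 1) := by
  have hsqrt : 9 ≤ √129 := Real.le_sqrt_of_sq_le (by norm_num)
  have hlower : 4 < 3 * α ^ 2 + 9 * α := four_lt_of_sqrt_lt h₁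
  have hupper : α ^ 2 + 2 * α < 1 := sq_add_two_mul_lt_one_of_lt_sqrt (by linarith) h₂
  have hself := Texp_Texp_Texp_self hupper hlower
  have hmatch := Texp_Texp_Texp_add_one_eq_Texp_Texp_Texp_self hupper (by linarith)
  exact ⟨hself, hmatch.trans hself⟩
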